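/- The density ρ(d) = (1/(2J₂(2))) e^{−3|d|/2} J₁(2e^{−|d|/2}) satisfies the integral equation ρ(d) = e^{d}∫_{−∞}^{d} ρ(δ)dδ + e^{2d}∫_{d}^{∞} ρ(δ)e^{−δ}dδ for all d < 0. -/

import Mathlib

open Real MeasureTheory Set

/-- The Bessel function of the first kind of integer order `n`. -/
noncomputable def besselJ (n : ℕ) (x : ℝ) : ℝ :=
  ∑' m : ℕ, (-1 : ℝ) ^ m / (m.factorial * (m + n).factorial) * (x / 2) ^ (2 * m + n)

/-- The stationary density of the difference chain. -/
noncomputable def ρstat (d : ℝ) : ℝ :=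
  (1 / (2 * besselJ 2 2)) * exp (-(3 * |d| / 2)) * besselJ 1 (2 * exp (-(|d| / 2)))

/-- The Taylor coefficients of `x ↦ J₁(2x) / x` in powers of `x ^ 2`. -/
noncomputable def besselCoeff (m : ℕ) : ℝ :=
  (-1 : ℝ) ^ m / (m.factorial * (m + 1).factorial)

theorem besselCoeff_succ (m : ℕ) :
    besselCoeff (m + 1) = -besselCoeff m / ((m + 1) * (m + 2)) := by
  unfold besselCoeff
  have h : (m.factorial : ℝ) ≠ 0 := by positivity
  rw [Nat.factorial_succ (m + 1), Nat.factorial_succ m]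
  push_cast
  field_simp
  ring

theorem abs_besselCoeff_le (m : ℕ) : |besselCoeff m| ≤ 1 / m.factorial := by
  have h : (1 : ℝ) ≤ (m + 1).factorial := by exact_mod_cast Nat.factorial_pos _
  rw [besselCoeff, abs_div, abs_pow, abs_neg, abs_one, one_pow,
    abs_of_pos (by positivity : (0 : ℝ) < m.factorial * (m + 1).factorial)]
  gcongr
  exact le_mul_of_one_le_right (by positivity) h

theorem exp_add_mul (k m : ℕ) (c : ℝ) :
    exp (((m : ℝ) + k) * c) = exp c ^ m * exp (k * c) := by
  rw [add_mul, exp_add, ← exp_nat_mul]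

theorem summable_abs_besselCoeff_mul_exp (k : ℕ) (c : ℝ) :
    Summable fun m : ℕ => |besselCoeff m| * exp (((m : ℝ) + k) * c) := by
  refine Summable.of_nonneg_of_le (fun m => by positivity) (fun m => ?_)
    ((Real.summable_pow_div_factorial (exp c)).mul_right (exp (k * c)))
  rw [exp_add_mul, ← mul_assoc]
  gcongr
  calc |besselCoeff m| * exp c ^ m ≤ 1 / m.factorial * exp c ^ m := by
        gcongr
        exact abs_besselCoeff_le m
    _ = exp c ^ m / m.factorial := by ring

theorem summable_besselCoeff_mul_exp (k : ℕ) (c : ℝ) :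
    Summable fun m : ℕ => besselCoeff m * exp (((m : ℝ) + k) * c) := by
  refine Summable.of_norm ((summable_abs_besselCoeff_mul_exp k c).congr fun m => ?_)
  rw [norm_mul, norm_eq_abs, norm_eq_abs, abs_exp]

/-- The exponential series `∑ aₘ exp ((m + k) δ)` with the coefficients of `J₁`. -/
noncomputable def besselExpSeries (k : ℕ) (δ : ℝ) : ℝ :=
  ∑' m : ℕ, besselCoeff m * exp (((m : ℝ) + k) * δ)

/-- The antiderivative of `besselExpSeries k` that vanishes at `-∞`. -/
noncomputable def besselExpPrimitive (k : ℕ) (c : ℝ) : ℝ :=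
  ∑' m : ℕ, besselCoeff m * (exp (((m : ℝ) + k) * c) / ((m : ℝ) + k))

theorem summable_abs_besselCoeff_mul_exp_div (k : ℕ) (hk : 1 ≤ k) (c : ℝ) :
    Summable fun m : ℕ => |besselCoeff m| * (exp (((m : ℝ) + k) * c) / ((m : ℝ) + k)) := by
  refine Summable.of_nonneg_of_le (fun m => by positivity) (fun m => ?_)
    (summable_abs_besselCoeff_mul_exp k c)
  have h : (1 : ℝ) ≤ k := by exact_mod_cast hk
  gcongr
  exact div_le_self (exp_pos _).le (by linarith [m.cast_nonneg (α := ℝ)])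

theorem hasSum_besselExpPrimitive (k : ℕ) (hk : 1 ≤ k) (c : ℝ) :
    HasSum (fun m : ℕ => besselCoeff m * (exp (((m : ℝ) + k) * c) / ((m : ℝ) + k)))
      (besselExpPrimitive k c) := by
  refine (Summable.of_norm ((summable_abs_besselCoeff_mul_exp_div k hk c).congr
    fun m => ?_)).hasSum
  rw [norm_mul, norm_eq_abs, norm_eq_abs,
    abs_of_nonneg (by positivity : 0 ≤ exp (((m : ℝ) + k) * c) / ((m : ℝ) + k))]

theorem continuous_besselExpSeries (k : ℕ) : Continuous (besselExpSeries k) := by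
  refine continuous_iff_continuousAt.2 fun x => ?_
  have h : ContinuousOn (besselExpSeries k) (Iio (x + 1)) := by
    refine continuousOn_tsum (fun m => by fun_prop)
      (summable_abs_besselCoeff_mul_exp k (x + 1)) fun m y hy => ?_
    rw [norm_mul, norm_eq_abs, norm_eq_abs, abs_exp]
    gcongr
    exact (mem_Iio.1 hy).le
  exact h.continuousAt (Iio_mem_nhds (by linarith))

theorem integral_besselExpSeries_Iic (k : ℕ) (hk : 1 ≤ k) (c : ℝ) :
    ∫ δ in Iic c, besselExpSeries k δ = besselExpPrimitive k c := by
  have hpos : ∀ m : ℕ, (0 : ℝ) < (m : ℝ) + k := fun m => by positivity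
  refine ((hasSum_integral_of_summable_integral_norm
    (F := fun (m : ℕ) (δ : ℝ) => besselCoeff m * exp (((m : ℝ) + k) * δ))
    (fun m => (integrableOn_exp_mul_Iic (hpos m) c).const_mul _) ?_).unique ?_)
  · refine (summable_abs_besselCoeff_mul_exp_div k hk c).congr fun m => ?_
    simp only [norm_mul, norm_eq_abs, abs_exp]
    rw [integral_const_mul, integral_exp_mul_Iic (hpos m)]
  · refine (hasSum_besselExpPrimitive k hk c).congr_fun fun m => ?_
    rw [integral_const_mul, integral_exp_mul_Iic (hpos m)]

theorem integrableOn_besselExpSeries_Iic (k : ℕ) (hk : 1 ≤ k) (c : ℝ) :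
    IntegrableOn (besselExpSeries k) (Iic c) := by
  have h1 : (1 : ℝ) ≤ k := by exact_mod_cast hk
  have hpos : (0 : ℝ) < k := by linarith
  refine ((integrableOn_exp_mul_Iic hpos c).const_mul
    (∑' m : ℕ, |besselCoeff m| * exp (((m : ℝ) + (0 : ℕ)) * c))).mono'
    (continuous_besselExpSeries k).aestronglyMeasurable ?_
  refine (ae_restrict_iff' measurableSet_Iic).2 (.of_forall fun x hx => ?_)
  refine tsum_of_norm_bounded
    ((summable_abs_besselCoeff_mul_exp 0 c).hasSum.mul_right (exp (k * x))) fun m => ?_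
  rw [norm_mul, norm_eq_abs, norm_eq_abs, abs_exp, add_mul, exp_add, ← mul_assoc]
  have : exp (m * x) ≤ exp (((m : ℝ) + (0 : ℕ)) * c) := by
    rw [Nat.cast_zero, add_zero]
    gcongr
    exact hx
  gcongr

theorem ρstat_of_nonpos {δ : ℝ} (h : δ ≤ 0) :
    ρstat δ = 1 / (2 * besselJ 2 2) * besselExpSeries 2 δ := by
  rw [ρstat, mul_assoc, abs_of_nonpos h]
  congr 1
  rw [besselJ, besselExpSeries, ← tsum_mul_left]
  refine tsum_congr fun m => ?_
  rw [← besselCoeff, mul_div_cancel_left₀ _ two_ne_zero, ← exp_nat_mul, mul_left_comm, ← exp_add]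
  congr 2
  push_cast
  ring

theorem ρstat_neg (δ : ℝ) : ρstat (-δ) = ρstat δ := by
  simp only [ρstat, abs_neg]

theorem besselExpSeries_mul_exp (k : ℕ) (δ : ℝ) :
    besselExpSeries k δ * exp δ = besselExpSeries (k + 1) δ := by
  rw [besselExpSeries, besselExpSeries, ← tsum_mul_right]
  refine tsum_congr fun m => ?_
  rw [mul_assoc, ← exp_add]
  congr 2
  push_cast
  ring

theorem besselExpSeries_mul_exp_neg (k : ℕ) (δ : ℝ) :
    besselExpSeries (k + 1) δ * exp (-δ) = besselExpSeries k δ := by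
  rw [← besselExpSeries_mul_exp, mul_assoc, ← exp_add, add_neg_cancel, exp_zero, mul_one]

theorem integral_ρstat_Iio {d : ℝ} (hd : d ≤ 0) :
    ∫ δ in Iio d, ρstat δ = 1 / (2 * besselJ 2 2) * besselExpPrimitive 2 d := by
  rw [← integral_Iic_eq_integral_Iio, ← integral_besselExpSeries_Iic 2 (by norm_num),
    ← integral_const_mul]
  exact setIntegral_congr_fun measurableSet_Iic fun δ hδ => ρstat_of_nonpos (hδ.trans hd)

theorem integral_ρstat_mul_exp_neg_Ioi {d : ℝ} (hd : d ≤ 0) :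
    ∫ δ in Ioi d, ρstat δ * exp (-δ) = 1 / (2 * besselJ 2 2) *
      (besselExpPrimitive 1 0 - besselExpPrimitive 1 d + besselExpPrimitive 3 0) := by
  set C := 1 / (2 * besselJ 2 2)
  have hneg : ∀ δ ≤ 0, ρstat δ * exp (-δ) = C * besselExpSeries 1 δ := fun δ hδ => by
    rw [ρstat_of_nonpos hδ, mul_assoc, besselExpSeries_mul_exp_neg 1]
  have hpos : ∀ δ ≤ 0, ρstat (-δ) * exp (-(-δ)) = C * besselExpSeries 3 δ := fun δ hδ => by
    rw [ρstat_neg, ρstat_of_nonpos hδ, neg_neg, mul_assoc, besselExpSeries_mul_exp 2]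
  have hint : IntegrableOn (fun δ => C * besselExpSeries 1 δ) (Iic 0) :=
    (integrableOn_besselExpSeries_Iic 1 le_rfl 0).const_mul C
  have hIoc : ∫ δ in Ioc d 0, ρstat δ * exp (-δ) =
      C * (besselExpPrimitive 1 0 - besselExpPrimitive 1 d) := by
    rw [setIntegral_congr_fun measurableSet_Ioc fun δ hδ => hneg δ hδ.2,
      ← intervalIntegral.integral_of_le hd,
      ← intervalIntegral.integral_Iic_sub_Iic (hint.mono_set (Iic_subset_Iic.2 hd)) hint,
      integral_const_mul, integral_const_mul, integral_besselExpSeries_Iic 1 le_rfl,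
      integral_besselExpSeries_Iic 1 le_rfl, mul_sub]
  have hIoi : ∫ δ in Ioi 0, ρstat δ * exp (-δ) = C * besselExpPrimitive 3 0 := by
    rw [← integral_besselExpSeries_Iic 3 (by norm_num), ← integral_const_mul,
      ← setIntegral_congr_fun measurableSet_Iic hpos,
      integral_comp_neg_Iic 0 (fun δ => ρstat δ * exp (-δ)), neg_zero]
  have hintIoc : IntegrableOn (fun δ => ρstat δ * exp (-δ)) (Ioc d 0) :=
    (hint.mono_set Ioc_subset_Iic_self).congr_fun (fun δ hδ => (hneg δ hδ.2).symm)
      measurableSet_Ioc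
  have hintIoi : IntegrableOn (fun δ => ρstat δ * exp (-δ)) (Ioi 0) := by
    have h : IntegrableOn (fun δ => ρstat (-δ) * exp (-(-δ))) (Iic (-0)) := by
      rw [neg_zero]
      exact IntegrableOn.congr_fun
        ((integrableOn_besselExpSeries_Iic 3 (by norm_num) 0).const_mul C)
        (fun δ hδ => (hpos δ hδ).symm) measurableSet_Iic
    simpa only [neg_neg] using h.comp_neg_Ici.mono_set Ioi_subset_Ici_self
  rw [← Ioc_union_Ioi_eq_Ioi hd, setIntegral_union (Ioc_disjoint_Ioi le_rfl) measurableSet_Ioi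
    hintIoc hintIoi, hIoc, hIoi, mul_add]

/-- The terms of the left side telescope as differences of `2 aₘ / (m + 2)`. -/
theorem besselExpPrimitive_one_zero_add_three_zero :
    besselExpPrimitive 1 0 + besselExpPrimitive 3 0 = 1 := by
  have hs := (hasSum_besselExpPrimitive 2 (by norm_num) 0).mul_left 2
  have ht := (hasSum_nat_add_iff' 1).2 hs
  have h := ((hasSum_besselExpPrimitive 1 le_rfl 0).add
    (hasSum_besselExpPrimitive 3 (by norm_num) 0)).unique ((hs.sub ht).congr_fun fun m => ?_)
  · rw [h]
    simp [besselCoeff]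
  · rw [besselCoeff_succ]
    push_cast
    simp only [mul_zero, exp_zero]
    field_simp
    ring

theorem besselExpSeries_two_eq (d : ℝ) :
    besselExpSeries 2 d = exp d * besselExpPrimitive 2 d +
      exp (2 * d) * (1 - besselExpPrimitive 1 d) := by
  have hs := (hasSum_nat_add_iff' 1).2 (summable_besselCoeff_mul_exp 2 d).hasSum
  have h := (((hasSum_besselExpPrimitive 2 (by norm_num) d).mul_left (exp d)).sub
    ((hasSum_besselExpPrimitive 1 le_rfl d).mul_left (exp (2 * d)))).unique
    (hs.congr_fun fun m => ?_)
  · have h0 : besselCoeff 0 = 1 := by simp [besselCoeff]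
    rw [← besselExpSeries, Finset.sum_range_one, h0, Nat.cast_zero, zero_add, Nat.cast_ofNat] at h
    linear_combination -h
  · rw [besselCoeff_succ, exp_add_mul, exp_add_mul, exp_add_mul]
    have h2 : exp (2 * d) = exp d ^ 2 := by rw [← exp_nat_mul]; norm_num
    push_cast
    rw [h2, one_mul, pow_succ]
    field_simp
    ring

/-- `ρstat` satisfies the stationary integral equation for `d < 0`. -/
theorem ρstat_integral_equation :
    ∀ d < (0 : ℝ), ρstat d =
      exp d * (∫ δ in Iio d, ρstat δ) + exp (2 * d) * ∫ δ in Ioi d, ρstat δ * exp (-δ) := by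
  intro d hd
  rw [integral_ρstat_Iio hd.le, integral_ρstat_mul_exp_neg_Ioi hd.le, ρstat_of_nonpos hd.le,
    besselExpSeries_two_eq, ← besselExpPrimitive_one_zero_add_three_zero]
  ring
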